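/- arXiv:1802.00681 — 7 statements merged into one kernel-verified Lean document; each statement's English description precedes it below -/
import Mathlib

section
/- Let T : D → D be a (λ,ρ)-firmly nonexpansive mapping for some λ ∈ (0,1), let w ∈ D be a fixed point of T, and let (f_n), (g_n) be generated by the iterative process g_n = (1−α_n) f_n + α_n T f_n, f_{n+1} = T g_n with (α_n) ⊂ (0,1) and f_1 ∈ D. Then for every n, ρ(f_{n+1} − w) ≤ ρ(g_n − w) ≤ ρ(f_n − w); in particular the sequence (ρ(f_n − w)) is nonincreasing. -/
/-- Along the iterative process, ρ(f_{n+1} − w) ≤ ρ(g_n − w) ≤ ρ(f_n − w)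
for any fixed point w; in particular (ρ(f_n − w)) is nonincreasing. -/
theorem stmt_1
    {V : Type*} [AddCommGroup V] [Module ℝ V]
    (ρ : V → ℝ)
    (hnonneg : ∀ f : V, 0 ≤ ρ f)
    (heven : ∀ f : V, ρ (-f) = ρ f)
    (hconv : ∀ f g : V, ∀ α β : ℝ, 0 ≤ α → 0 ≤ β → α + β = 1 →
      ρ (α • f + β • g) ≤ α * ρ f + β * ρ g)
    (D : Set V) (hDne : D.Nonempty) (hDconv : Convex ℝ D)
    (T : V → V) (hTmaps : ∀ f ∈ D, T f ∈ D)
    (lam : ℝ) (hlam : lam ∈ Set.Ioo (0 : ℝ) 1)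
    (hfirm : ∀ f ∈ D, ∀ g ∈ D,
      ρ (T f - T g) ≤ ρ ((1 - lam) • (f - g) + lam • (T f - T g)))
    (w : V) (hwD : w ∈ D) (hw : T w = w)
    (α : ℕ → ℝ) (hα : ∀ n, α n ∈ Set.Ioo (0 : ℝ) 1)
    (f g : ℕ → V) (hf0 : f 0 ∈ D)
    (hg : ∀ n, g n = (1 - α n) • f n + (α n) • T (f n))
    (hfrec : ∀ n, f (n + 1) = T (g n)) :
    (∀ n, ρ (f (n + 1) - w) ≤ ρ (g n - w) ∧ ρ (g n - w) ≤ ρ (f n - w)) ∧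
      Antitone (fun n => ρ (f n - w)) := by
  obtain ⟨hl0, hl1⟩ := hlam
  have key : ∀ x ∈ D, ρ (T x - w) ≤ ρ (x - w) := by
    intro x hx
    have h1 := hfirm x hx w hwD
    rw [hw] at h1
    have h2 := hconv (x - w) (T x - w) (1 - lam) lam (by linarith) hl0.le (by ring)
    have h3 : (1 - lam) * ρ (T x - w) ≤ (1 - lam) * ρ (x - w) := by linarith
    exact le_of_mul_le_mul_left h3 (by linarith)
  have hgD : ∀ n, f n ∈ D → g n ∈ D := by
    intro n hn
    rw [hg n]
    exact hDconv hn (hTmaps _ hn) (by linarith [(hα n).2]) (hα n).1.le (by ring)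
  have hfD : ∀ n, f n ∈ D := by
    intro n
    induction n with
    | zero => exact hf0
    | succ k ih =>
      rw [hfrec k]
      exact hTmaps _ (hgD k ih)
  have main : ∀ n, ρ (f (n + 1) - w) ≤ ρ (g n - w) ∧ ρ (g n - w) ≤ ρ (f n - w) := by
    intro n
    refine ⟨?_, ?_⟩
    · rw [hfrec n]
      exact key _ (hgD n (hfD n))
    · obtain ⟨ha0, ha1⟩ := hα n
      have e : g n - w = (1 - α n) • (f n - w) + (α n) • (T (f n) - w) := by
        rw [hg n]; module
      have h2 := hconv (f n - w) (T (f n) - w) (1 - α n) (α n) (by linarith) ha0.le (by ring)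
      rw [e]
      have h3 := mul_le_mul_of_nonneg_left (key _ (hfD n)) ha0.le
      linarith
  exact ⟨main, antitone_nat_of_succ_le fun n => (main n).1.trans (main n).2⟩
end

section
/- Let T : D → D be a (λ,ρ)-firmly nonexpansive mapping for some λ ∈ (0,1), let w ∈ D be a fixed point of T, and let (f_n) be generated by the iterative process g_n = (1−α_n) f_n + α_n T f_n, f_{n+1} = T g_n with (α_n) ⊂ (0,1) and f_1 ∈ D. Then the limit lim_{n→∞} ρ(f_n − w) exists (the real sequence (ρ(f_n − w)) converges). -/
open Filter

/-- The limit lim_{n→∞} ρ(f_n − w) exists. -/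
theorem stmt_2
    {V : Type*} [AddCommGroup V] [Module ℝ V]
    (ρ : V → ℝ)
    (hnonneg : ∀ f : V, 0 ≤ ρ f)
    (heven : ∀ f : V, ρ (-f) = ρ f)
    (hconv : ∀ f g : V, ∀ α β : ℝ, 0 ≤ α → 0 ≤ β → α + β = 1 →
      ρ (α • f + β • g) ≤ α * ρ f + β * ρ g)
    (D : Set V) (hDne : D.Nonempty) (hDconv : Convex ℝ D)
    (T : V → V) (hTmaps : ∀ f ∈ D, T f ∈ D)
    (lam : ℝ) (hlam : lam ∈ Set.Ioo (0 : ℝ) 1)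
    (hfirm : ∀ f ∈ D, ∀ g ∈ D,
      ρ (T f - T g) ≤ ρ ((1 - lam) • (f - g) + lam • (T f - T g)))
    (w : V) (hwD : w ∈ D) (hw : T w = w)
    (α : ℕ → ℝ) (hα : ∀ n, α n ∈ Set.Ioo (0 : ℝ) 1)
    (f g : ℕ → V) (hf0 : f 0 ∈ D)
    (hg : ∀ n, g n = (1 - α n) • f n + (α n) • T (f n))
    (hfrec : ∀ n, f (n + 1) = T (g n)) :
    ∃ m : ℝ, Tendsto (fun n => ρ (f n - w)) atTop (nhds m) := by
  obtain ⟨hl0, hl1⟩ := hlam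
  have hne : ∀ x ∈ D, ρ (T x - w) ≤ ρ (x - w) := by
    intro x hx
    have h1 := hfirm x hx w hwD
    rw [hw] at h1
    have h2 := hconv (x - w) (T x - w) (1 - lam) lam (by linarith) hl0.le (by ring)
    have h3 : (1 - lam) * ρ (T x - w) ≤ (1 - lam) * ρ (x - w) := by linarith
    exact le_of_mul_le_mul_left h3 (by linarith)
  have hgD : ∀ n, f n ∈ D → g n ∈ D := by
    intro n hn
    rw [hg]
    exact hDconv hn (hTmaps _ hn) (by linarith [(hα n).2]) (hα n).1.le (by ring)
  have hfD : ∀ n, f n ∈ D := by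
    intro n
    induction n with
    | zero => exact hf0
    | succ k ih => rw [hfrec]; exact hTmaps _ (hgD k ih)
  have hanti : Antitone (fun n => ρ (f n - w)) := by
    apply antitone_nat_of_succ_le
    intro n
    have h1 := hne _ (hgD n (hfD n))
    have h2 := hconv (f n - w) (T (f n) - w) (1 - α n) (α n)
      (by linarith [(hα n).2]) (hα n).1.le (by ring)
    have h3 : g n - w = (1 - α n) • (f n - w) + (α n) • (T (f n) - w) := by
      rw [hg]; module
    rw [← h3] at h2
    have h4 := mul_le_mul_of_nonneg_left (hne _ (hfD n)) (hα n).1.le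
    rw [hfrec]
    linarith
  exact ⟨_, tendsto_atTop_ciInf hanti ⟨0, by rintro _ ⟨n, rfl⟩; exact hnonneg _⟩⟩
end

section
/- Let T : D → D be a (λ,ρ)-firmly nonexpansive mapping for some λ ∈ (0,1), let w ∈ D be a fixed point of T, and let (f_n), (g_n) be generated by the iterative process g_n = (1−α_n) f_n + α_n T f_n, f_{n+1} = T g_n with (α_n) ⊂ (0,1) and f_1 ∈ D. Then lim_{n→∞} ρ(g_n − w) exists and equals lim_{n→∞} ρ(f_n − w). -/
open Filter

/-- lim ρ(g_n − w) exists and equals lim ρ(f_n − w). -/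
theorem stmt_3
    {V : Type*} [AddCommGroup V] [Module ℝ V]
    (ρ : V → ℝ)
    (hnonneg : ∀ f : V, 0 ≤ ρ f)
    (heven : ∀ f : V, ρ (-f) = ρ f)
    (hconv : ∀ f g : V, ∀ α β : ℝ, 0 ≤ α → 0 ≤ β → α + β = 1 →
      ρ (α • f + β • g) ≤ α * ρ f + β * ρ g)
    (D : Set V) (hDne : D.Nonempty) (hDconv : Convex ℝ D)
    (T : V → V) (hTmaps : ∀ f ∈ D, T f ∈ D)
    (lam : ℝ) (hlam : lam ∈ Set.Ioo (0 : ℝ) 1)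
    (hfirm : ∀ f ∈ D, ∀ g ∈ D,
      ρ (T f - T g) ≤ ρ ((1 - lam) • (f - g) + lam • (T f - T g)))
    (w : V) (hwD : w ∈ D) (hw : T w = w)
    (α : ℕ → ℝ) (hα : ∀ n, α n ∈ Set.Ioo (0 : ℝ) 1)
    (f g : ℕ → V) (hf0 : f 0 ∈ D)
    (hg : ∀ n, g n = (1 - α n) • f n + (α n) • T (f n))
    (hfrec : ∀ n, f (n + 1) = T (g n)) :
    ∃ m : ℝ, Tendsto (fun n => ρ (f n - w)) atTop (nhds m) ∧
      Tendsto (fun n => ρ (g n - w)) atTop (nhds m) := by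
  obtain ⟨hl0, hl1⟩ := hlam
  have hne : ∀ x ∈ D, ρ (T x - w) ≤ ρ (x - w) := by
    intro x hx
    have h1 := hfirm x hx w hwD
    rw [hw] at h1
    have h2 := hconv (x - w) (T x - w) (1 - lam) lam (by linarith) hl0.le (by ring)
    have h3 : (1 - lam) * ρ (T x - w) ≤ (1 - lam) * ρ (x - w) := by linarith
    exact le_of_mul_le_mul_left h3 (by linarith)
  have hgD : ∀ n, f n ∈ D → g n ∈ D := by
    intro n hn
    rw [hg n]
    exact hDconv hn (hTmaps _ hn) (by linarith [(hα n).2]) (hα n).1.le (by ring)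
  have hfD : ∀ n, f n ∈ D := by
    intro n
    induction n with
    | zero => exact hf0
    | succ k ih => rw [hfrec k]; exact hTmaps _ (hgD k ih)
  have hgf : ∀ n, ρ (g n - w) ≤ ρ (f n - w) := by
    intro n
    have e : g n - w = (1 - α n) • (f n - w) + (α n) • (T (f n) - w) := by
      rw [hg n]; module
    have h2 := hconv (f n - w) (T (f n) - w) (1 - α n) (α n)
      (by linarith [(hα n).2]) (hα n).1.le (by ring)
    rw [← e] at h2
    have h3 := mul_le_mul_of_nonneg_left (hne _ (hfD n)) (hα n).1.le
    linarith
  have hfg : ∀ n, ρ (f (n + 1) - w) ≤ ρ (g n - w) := by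
    intro n
    rw [hfrec n]
    exact hne _ (hgD n (hfD n))
  have hanti : Antitone (fun n => ρ (f n - w)) :=
    antitone_nat_of_succ_le fun n => (hfg n).trans (hgf n)
  have hlim := tendsto_atTop_ciInf hanti ⟨0, by rintro _ ⟨n, rfl⟩; exact hnonneg _⟩
  exact ⟨_, hlim, tendsto_of_tendsto_of_tendsto_of_le_of_le
    ((tendsto_add_atTop_iff_nat 1).2 hlim) hlim hfg hgf⟩
end

section
/- Let T : D → D be a (λ,ρ)-firmly nonexpansive mapping for some λ ∈ (0,1), let w ∈ D be a fixed point of T, and let (f_n) be generated by the iterative process g_n = (1−α_n) f_n + α_n T f_n, f_{n+1} = T g_n with (α_n) ⊂ (0,1) and f_1 ∈ D. Then limsup_{n→∞} ρ(T f_n − w) ≤ lim_{n→∞} ρ(f_n − w). -/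
open Filter

/-- limsup ρ(T f_n − w) ≤ lim ρ(f_n − w). -/
theorem stmt_4
    {V : Type*} [AddCommGroup V] [Module ℝ V]
    (ρ : V → ℝ)
    (hnonneg : ∀ f : V, 0 ≤ ρ f)
    (heven : ∀ f : V, ρ (-f) = ρ f)
    (hconv : ∀ f g : V, ∀ α β : ℝ, 0 ≤ α → 0 ≤ β → α + β = 1 →
      ρ (α • f + β • g) ≤ α * ρ f + β * ρ g)
    (D : Set V) (hDne : D.Nonempty) (hDconv : Convex ℝ D)
    (T : V → V) (hTmaps : ∀ f ∈ D, T f ∈ D)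
    (lam : ℝ) (hlam : lam ∈ Set.Ioo (0 : ℝ) 1)
    (hfirm : ∀ f ∈ D, ∀ g ∈ D,
      ρ (T f - T g) ≤ ρ ((1 - lam) • (f - g) + lam • (T f - T g)))
    (w : V) (hwD : w ∈ D) (hw : T w = w)
    (α : ℕ → ℝ) (hα : ∀ n, α n ∈ Set.Ioo (0 : ℝ) 1)
    (f g : ℕ → V) (hf0 : f 0 ∈ D)
    (hg : ∀ n, g n = (1 - α n) • f n + (α n) • T (f n))
    (hfrec : ∀ n, f (n + 1) = T (g n)) :
    ∃ m : ℝ, Tendsto (fun n => ρ (f n - w)) atTop (nhds m) ∧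
      limsup (fun n => ρ (T (f n) - w)) atTop ≤ m := by
  have hT : ∀ x ∈ D, ρ (T x - w) ≤ ρ (x - w) := by
    intro x hx
    have h1 := hfirm x hx w hwD
    rw [hw] at h1
    have h2 := hconv (x - w) (T x - w) (1 - lam) lam (by linarith [hlam.2]) hlam.1.le (by ring)
    have h3 : (1 - lam) * ρ (T x - w) ≤ (1 - lam) * ρ (x - w) := by linarith
    exact le_of_mul_le_mul_left h3 (by linarith [hlam.2])
  have hgD : ∀ n, f n ∈ D → g n ∈ D := by
    intro n hn
    rw [hg n]
    exact hDconv hn (hTmaps _ hn) (by linarith [(hα n).2]) (hα n).1.le (by ring)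
  have hfD : ∀ n, f n ∈ D := by
    intro n
    induction n with
    | zero => exact hf0
    | succ k ih =>
      rw [hfrec k]
      exact hTmaps _ (hgD k ih)
  have hanti : Antitone (fun n => ρ (f n - w)) := by
    apply antitone_nat_of_succ_le
    intro n
    have h1 := hT (g n) (hgD n (hfD n))
    have h2 := hconv (f n - w) (T (f n) - w) (1 - α n) (α n) (by linarith [(hα n).2])
      (hα n).1.le (by ring)
    have h3 : g n - w = (1 - α n) • (f n - w) + α n • (T (f n) - w) := by
      rw [hg n]
      module
    rw [← h3] at h2
    have h4 := mul_le_mul_of_nonneg_left (hT (f n) (hfD n)) (hα n).1.le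
    rw [hfrec n]
    linarith
  have hbdd : BddBelow (Set.range (fun n => ρ (f n - w))) :=
    ⟨0, by rintro _ ⟨n, rfl⟩; exact hnonneg _⟩
  have hlim := tendsto_atTop_ciInf hanti hbdd
  refine ⟨_, hlim, ?_⟩
  rw [← hlim.limsup_eq]
  refine limsup_le_limsup (Eventually.of_forall fun n => hT _ (hfD n)) ?_ ?_
  · exact IsBoundedUnder.isCoboundedUnder_le ⟨0, by simpa using ⟨0, fun n _ => hnonneg _⟩⟩
  · exact hlim.isBoundedUnder_le
end

section
/- Let T : D → D have a nonempty fixed point set F and satisfy condition (I) with respect to a nondecreasing function ℓ : [0,∞) → [0,∞) with ℓ(0) = 0 and ℓ(r) > 0 for r > 0. Let (f_n) ⊂ D be a sequence such that ρ(f_{n+1} − w) ≤ ρ(f_n − w) for every w ∈ F and every n, and such that ρ(f_n − T f_n) → 0. Then lim_{n→∞} dist_ρ(f_n, F) = 0. -/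
open Filter

/-- The ρ-distance from a point to a set: dist_ρ(f, A) = inf {ρ(f − h) : h ∈ A}. -/
noncomputable def distRho {V : Type*} [AddCommGroup V] [Module ℝ V]
    (ρ : V → ℝ) (f : V) (A : Set V) : ℝ :=
  sInf ((fun h => ρ (f - h)) '' A)

/-- Under condition (I) and Fejér monotonicity with ρ(f_n − T f_n) → 0,
one has dist_ρ(f_n, F) → 0. -/
theorem stmt_7
    {V : Type*} [AddCommGroup V] [Module ℝ V]
    (ρ : V → ℝ)
    (hnonneg : ∀ f : V, 0 ≤ ρ f)
    (heven : ∀ f : V, ρ (-f) = ρ f)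
    (hconv : ∀ f g : V, ∀ α β : ℝ, 0 ≤ α → 0 ≤ β → α + β = 1 →
      ρ (α • f + β • g) ≤ α * ρ f + β * ρ g)
    (D : Set V) (hDne : D.Nonempty) (hDconv : Convex ℝ D)
    (T : V → V) (hTmaps : ∀ f ∈ D, T f ∈ D)
    (F : Set V) (hF : F = {f | f ∈ D ∧ T f = f}) (hFne : F.Nonempty)
    (ℓ : ℝ → ℝ) (hℓmono : MonotoneOn ℓ (Set.Ici 0)) (hℓ0 : ℓ 0 = 0)
    (hℓpos : ∀ r : ℝ, 0 < r → 0 < ℓ r)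
    (hcondI : ∀ f ∈ D, ℓ (distRho ρ f F) ≤ ρ (f - T f))
    (f : ℕ → V) (hfD : ∀ n, f n ∈ D)
    (hmono : ∀ w ∈ F, ∀ n, ρ (f (n + 1) - w) ≤ ρ (f n - w))
    (hTf : Tendsto (fun n => ρ (f n - T (f n))) atTop (nhds 0)) :
    Tendsto (fun n => distRho ρ (f n) F) atTop (nhds 0) := by
  have hd : ∀ n, 0 ≤ distRho ρ (f n) F := fun n =>
    Real.sInf_nonneg (by rintro _ ⟨h, _, rfl⟩; exact hnonneg _)
  rw [Metric.tendsto_atTop] at hTf ⊢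
  intro ε hε
  obtain ⟨N, hN⟩ := hTf (ℓ ε) (hℓpos ε hε)
  refine ⟨N, fun n hn => ?_⟩
  have h1 := hN n hn
  rw [Real.dist_eq, sub_zero, abs_of_nonneg (hnonneg _)] at h1
  rw [Real.dist_eq, sub_zero, abs_of_nonneg (hd n)]
  by_contra hc
  have h2 := hℓmono (Set.mem_Ici.2 hε.le) (Set.mem_Ici.2 (hd n)) (not_lt.1 hc)
  have h3 := hcondI (f n) (hfD n)
  linarith
end

section
/- Let F ⊆ D be nonempty and let (f_n) ⊂ D be a sequence such that ρ(f_{n+1} − w) ≤ ρ(f_n − w) for every w ∈ F and every n, and such that dist_ρ(f_n, F) → 0. Then for every ε > 0 there exists n_0 such that ρ((f_{n+m} − f_n)/2) < ε for all n ≥ n_0 and all m ≥ 0. -/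
open Filter

/-- Fejér monotone sequences with dist_ρ(f_n, F) → 0 are "half-Cauchy":
for every ε > 0 there is n₀ with ρ((f_{n+m} − f_n)/2) < ε for all n ≥ n₀, m ≥ 0. -/
theorem stmt_8
    {V : Type*} [AddCommGroup V] [Module ℝ V]
    (ρ : V → ℝ)
    (hnonneg : ∀ f : V, 0 ≤ ρ f)
    (heven : ∀ f : V, ρ (-f) = ρ f)
    (hconv : ∀ f g : V, ∀ α β : ℝ, 0 ≤ α → 0 ≤ β → α + β = 1 →
      ρ (α • f + β • g) ≤ α * ρ f + β * ρ g)
    (D : Set V) (hDne : D.Nonempty)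
    (F : Set V) (hFD : F ⊆ D) (hFne : F.Nonempty)
    (f : ℕ → V) (hfD : ∀ n, f n ∈ D)
    (hmono : ∀ w ∈ F, ∀ n, ρ (f (n + 1) - w) ≤ ρ (f n - w))
    (hdist : Tendsto (fun n => distRho ρ (f n) F) atTop (nhds 0)) :
    ∀ ε : ℝ, 0 < ε → ∃ n₀ : ℕ, ∀ n ≥ n₀, ∀ m : ℕ,
      ρ ((2⁻¹ : ℝ) • (f (n + m) - f n)) < ε := by
  intro ε hε
  obtain ⟨n₀, hn₀⟩ := (hdist.eventually (gt_mem_nhds hε)).exists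
  have hn₁ : sInf ((fun h => ρ (f n₀ - h)) '' F) < ε := hn₀
  obtain ⟨_, ⟨w, hw, rfl⟩, hlt⟩ := exists_lt_of_csInf_lt (hFne.image _) hn₁
  have hanti : Antitone (fun n => ρ (f n - w)) := antitone_nat_of_succ_le (hmono w hw)
  refine ⟨n₀, fun n hn m => ?_⟩
  have h1 : ρ (f n - w) ≤ ρ (f n₀ - w) := hanti hn
  have h2 : ρ (f (n + m) - w) ≤ ρ (f n₀ - w) := hanti (le_trans hn (Nat.le_add_right n m))
  have h3 := hconv (f (n + m) - w) (-(f n - w)) 2⁻¹ 2⁻¹ (by norm_num) (by norm_num) (by norm_num)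
  rw [heven, ← smul_add, show f (n + m) - w + -(f n - w) = f (n + m) - f n by abel] at h3
  have h4 : ρ (f n₀ - w) < ε := hlt
  linarith
end

section
/- Let T : D → D be a (λ,ρ)-firmly nonexpansive mapping for some λ ∈ (0,1) and let z ∈ D. Then for every f ∈ D, ρ((z − T z)/3) ≤ 2 ρ(z − f) + ρ(f − T f). -/
/-- For a (λ,ρ)-firmly nonexpansive T and z, f ∈ D,
ρ((z − T z)/3) ≤ 2 ρ(z − f) + ρ(f − T f). -/
theorem stmt_14
    {V : Type*} [AddCommGroup V] [Module ℝ V]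
    (ρ : V → ℝ)
    (hnonneg : ∀ f : V, 0 ≤ ρ f)
    (heven : ∀ f : V, ρ (-f) = ρ f)
    (hconv : ∀ f g : V, ∀ α β : ℝ, 0 ≤ α → 0 ≤ β → α + β = 1 →
      ρ (α • f + β • g) ≤ α * ρ f + β * ρ g)
    (D : Set V) (hDne : D.Nonempty) (hDconv : Convex ℝ D)
    (T : V → V) (hTmaps : ∀ f ∈ D, T f ∈ D)
    (lam : ℝ) (hlam : lam ∈ Set.Ioo (0 : ℝ) 1)
    (hfirm : ∀ f ∈ D, ∀ g ∈ D,
      ρ (T f - T g) ≤ ρ ((1 - lam) • (f - g) + lam • (T f - T g)))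
    (z : V) (hzD : z ∈ D) :
    ∀ f ∈ D, ρ ((3⁻¹ : ℝ) • (z - T z)) ≤ 2 * ρ (z - f) + ρ (f - T f) := by
  intro f hf
  obtain ⟨h0, h1⟩ := hlam
  have hs : ρ (f - z) = ρ (z - f) := by rw [← heven (f - z), neg_sub]
  have hT : ρ (T f - T z) ≤ ρ (z - f) := by
    have a := hfirm f hf z hzD
    have b := hconv (f - z) (T f - T z) (1 - lam) lam (by linarith) h0.le (by ring)
    rw [hs] at b
    have c : (1 - lam) * ρ (T f - T z) ≤ (1 - lam) * ρ (z - f) := by linarith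
    exact le_of_mul_le_mul_left c (by linarith)
  have e : (3⁻¹ : ℝ) • (z - T z) = (3⁻¹ : ℝ) • (z - f) +
      (2 / 3 : ℝ) • ((2⁻¹ : ℝ) • (f - T f) + (2⁻¹ : ℝ) • (T f - T z)) := by
    module
  have p := hconv (z - f) ((2⁻¹ : ℝ) • (f - T f) + (2⁻¹ : ℝ) • (T f - T z)) 3⁻¹ (2 / 3)
    (by norm_num) (by norm_num) (by norm_num)
  have q := hconv (f - T f) (T f - T z) 2⁻¹ 2⁻¹ (by norm_num) (by norm_num) (by norm_num)
  rw [e]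
  have n1 := hnonneg (z - f)
  have n2 := hnonneg (f - T f)
  linarith
end
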